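/- Nullspace equality for complex semidefinite conductivities: let σ = σ′ + iσ″ : E → ℂ^{d×d} with each σ′(e) real symmetric positive semidefinite, σ″(e) real symmetric commuting with σ′(e), and N(σ′(e)) ⊆ N(σ″(e)). Then N((L_σ)_{II}) = N((L_{σ′})_{II}) and N((L_σ)_{II}) ⊆ N((L_σ)_{BI}) (extending interior nullvectors by zero), and R((L_σ)_{II}) = R((L_{σ′})_{II}) ⊇ R((L_σ)_{IB}). -/

import Mathlib

/-! The discrete integration by parts `∑ᵢ xᵢ · (L_σ u)ᵢ = ∑ₑ (∇x)ₑ · σₑ (∇u)ₑ`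
(`sum_dotProduct_dlap`) carries the whole argument.

Nullspaces: if `z` vanishes on the boundary and `L_σ z` vanishes in the interior, pairing with
`z̄` gives `∑ₑ (∇z)ₑ* σₑ (∇z)ₑ = 0`. Its real part is `∑ₑ (∇z)ₑ* σ'ₑ (∇z)ₑ`, since `σ''ₑ` is
Hermitian, and every term is nonnegative, so `σ'ₑ (∇z)ₑ = 0`, whence also `σ''ₑ (∇z)ₑ = 0` and
`σₑ (∇z)ₑ = 0` on every edge. Thus the interior nullvectors of `L_σ` are exactly the `z` with
`σ'ₑ (∇z)ₑ = 0` on every edge (`edge_null_of_dlap`, `dlap_eq_zero`), a condition that does not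
involve `σ''`, and for such `z` the vector `L_σ z` vanishes on the boundary too.

Ranges: `(L_σ)_{II}` is complex symmetric, so its range is the annihilator of its nullspace
for the bilinear (not sesquilinear) pairing (`solvable_iff`). Equal nullspaces therefore give
equal ranges, and `L_σ g` is annihilated by each nullvector `z` because
`∑ₑ (∇z)ₑ · σₑ (∇g)ₑ = ∑ₑ (σₑ (∇z)ₑ) · (∇g)ₑ = 0`. The statements for `σ'` alone are the case
`σ'' = 0`. -/

open Matrix

/-- The `d`-dimensional discrete gradient. -/
def dgrad {V E : Type*} {d : ℕ} {K : Type*} [Field K] (e1 e2 : E → V)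
    (u : V → Fin d → K) : E → Fin d → K :=
  fun e => u (e1 e) - u (e2 e)

/-- The matrix-weighted graph Laplacian `L_σ = ∇ᵀ diag(σ) ∇` applied to `u`. -/
noncomputable def dlap {V E : Type*} [Fintype E] [DecidableEq V] {d : ℕ} {K : Type*}
    [Field K] (e1 e2 : E → V) (σ : E → Matrix (Fin d) (Fin d) K)
    (u : V → Fin d → K) : V → Fin d → K :=
  fun i => ∑ e, ((if e1 e = i then (1 : K) else 0) - (if e2 e = i then 1 else 0)) •
    (σ e *ᵥ dgrad e1 e2 u e)

/-- Complexification of a real matrix. -/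
def cplx {d : ℕ} (M : Matrix (Fin d) (Fin d) ℝ) : Matrix (Fin d) (Fin d) ℂ :=
  M.map (fun a => (a : ℂ))

section

open scoped ComplexOrder

variable {V E : Type*} [Fintype E] [DecidableEq V] {d : ℕ}

/-- Discrete integration by parts. -/
lemma sum_dotProduct_dlap [Fintype V] (e1 e2 : E → V) (σ : E → Matrix (Fin d) (Fin d) ℂ)
    (x u : V → Fin d → ℂ) :
    ∑ i, x i ⬝ᵥ dlap e1 e2 σ u i = ∑ e, dgrad e1 e2 x e ⬝ᵥ (σ e *ᵥ dgrad e1 e2 u e) := by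
  simp only [dlap, dotProduct_sum, dotProduct_smul]
  rw [Finset.sum_comm]
  refine Finset.sum_congr rfl fun e _ => ?_
  generalize σ e *ᵥ dgrad e1 e2 u e = y
  simp [dgrad, sub_dotProduct, Finset.sum_sub_distrib, sub_mul]

lemma sum_dotProduct_dlap_comm [Fintype V] (e1 e2 : E → V) (σ : E → Matrix (Fin d) (Fin d) ℂ)
    (hσ : ∀ e, (σ e).IsSymm) (x u : V → Fin d → ℂ) :
    ∑ i, x i ⬝ᵥ dlap e1 e2 σ u i = ∑ i, dlap e1 e2 σ x i ⬝ᵥ u i := by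
  simp only [dotProduct_comm _ (u _)]
  rw [sum_dotProduct_dlap, sum_dotProduct_dlap]
  refine Finset.sum_congr rfl fun e _ => ?_
  rw [dotProduct_mulVec, ← mulVec_transpose, (hσ e).eq, dotProduct_comm]

lemma cplx_isSymm {A : Matrix (Fin d) (Fin d) ℝ} (h : A.IsSymm) : (cplx A).IsSymm := by
  rw [IsSymm, cplx, ← transpose_map, h.eq]

lemma cplx_isHermitian {A : Matrix (Fin d) (Fin d) ℝ} (h : A.IsSymm) :
    (cplx A).IsHermitian := by
  ext i j
  simp [cplx, h.apply i j]

lemma cplx_posSemidef {A : Matrix (Fin d) (Fin d) ℝ} (h : A.PosSemidef) :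
    (cplx A).PosSemidef := by
  obtain ⟨B, rfl⟩ : ∃ B : Matrix (Fin d) (Fin d) ℝ, A = Bᴴ * B := by
    classical
    open scoped MatrixOrder in
    exact CStarAlgebra.nonneg_iff_eq_star_mul_self.mp h.nonneg
  have : cplx (Bᴴ * B) = (cplx B)ᴴ * cplx B := by
    ext i j
    simp [cplx, mul_apply]
  rw [this]
  exact posSemidef_conjTranspose_mul_self _

lemma cplx_mulVec_eq_zero_iff (A : Matrix (Fin d) (Fin d) ℝ) (v : Fin d → ℂ) :
    cplx A *ᵥ v = 0 ↔ (A *ᵥ fun i => (v i).re) = 0 ∧ (A *ᵥ fun i => (v i).im) = 0 := by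
  simp only [funext_iff, Complex.ext_iff, ← forall_and]
  simp [cplx, mulVec, dotProduct]

/-- The hypothesis `N(σ') ⊆ N(σ'')` passes to complex vectors. -/
lemma cplx_null {A B : Matrix (Fin d) (Fin d) ℝ}
    (hnull : ∀ v : Fin d → ℝ, A *ᵥ v = 0 → B *ᵥ v = 0) {v : Fin d → ℂ}
    (hv : cplx A *ᵥ v = 0) : (cplx A + Complex.I • cplx B) *ᵥ v = 0 := by
  have hB : cplx B *ᵥ v = 0 := by
    rw [cplx_mulVec_eq_zero_iff] at hv ⊢
    exact ⟨hnull _ hv.1, hnull _ hv.2⟩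
  rw [add_mulVec, smul_mulVec, hv, hB, smul_zero, add_zero]

/-- The real part of the quadratic form of `A + iB` sees only `A`, as `B` is Hermitian. -/
lemma re_form {A B : Matrix (Fin d) (Fin d) ℝ} (hB : B.IsSymm) (v : Fin d → ℂ) :
    (star v ⬝ᵥ ((cplx A + Complex.I • cplx B) *ᵥ v)).re = (star v ⬝ᵥ (cplx A *ᵥ v)).re := by
  have h : (star v ⬝ᵥ (cplx B *ᵥ v)).im = 0 :=
    (cplx_isHermitian hB).im_star_dotProduct_mulVec_self v
  simp [add_mulVec, smul_mulVec, dotProduct_add, dotProduct_smul, h]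

lemma dlap_eq_zero (e1 e2 : E → V) (σ : E → Matrix (Fin d) (Fin d) ℂ) {z : V → Fin d → ℂ}
    (h : ∀ e, σ e *ᵥ dgrad e1 e2 z e = 0) (i : V) : dlap e1 e2 σ z i = 0 := by
  simp [dlap, h]

/-- An interior nullvector of `L_σ` satisfies `σ' ∇z = 0` on each edge. -/
lemma edge_null_of_dlap [Fintype V] (e1 e2 : E → V) (Bd : V → Prop)
    {σ' σ'' : E → Matrix (Fin d) (Fin d) ℝ}
    (hσ' : ∀ e, (σ' e).PosSemidef) (hσ'' : ∀ e, (σ'' e).IsSymm)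
    {z : V → Fin d → ℂ} (hz : ∀ i, Bd i → z i = 0)
    (h : ∀ i, ¬ Bd i → dlap e1 e2 (fun e => cplx (σ' e) + Complex.I • cplx (σ'' e)) z i = 0)
    (e : E) : cplx (σ' e) *ᵥ dgrad e1 e2 z e = 0 := by
  have h0 := sum_dotProduct_dlap e1 e2
    (fun e => cplx (σ' e) + Complex.I • cplx (σ'' e)) (star z) z
  have hl : ∀ i, star z i ⬝ᵥ
      dlap e1 e2 (fun e => cplx (σ' e) + Complex.I • cplx (σ'' e)) z i = 0 := by
    intro i
    by_cases hi : Bd i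
    · simp [hz i hi]
    · rw [h i hi, dotProduct_zero]
  have hg : ∀ e, dgrad e1 e2 (star z) e = star (dgrad e1 e2 z e) := fun e => by
    simp [dgrad]
  rw [Finset.sum_eq_zero fun i _ => hl i] at h0
  have h1 := congrArg Complex.re h0
  simp only [hg, Complex.re_sum, re_form (hσ'' _), Complex.zero_re] at h1
  have hnn : ∀ e, 0 ≤ star (dgrad e1 e2 z e) ⬝ᵥ (cplx (σ' e) *ᵥ dgrad e1 e2 z e) :=
    fun e => (cplx_posSemidef (hσ' e)).dotProduct_mulVec_nonneg _
  have h2 := (Finset.sum_eq_zero_iff_of_nonneg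
    fun e _ => (Complex.nonneg_iff.mp (hnn e)).1).mp h1.symm e (Finset.mem_univ e)
  exact ((cplx_posSemidef (hσ' e)).dotProduct_mulVec_zero_iff _).mp
    (Complex.ext h2 (Complex.nonneg_iff.mp (hnn e)).2.symm)

/-- Every linear functional on `V → Fin d → ℂ` is a bilinear pairing with a fixed vector. -/
lemma exists_pairing [Fintype V] (f : (V → Fin d → ℂ) →ₗ[ℂ] ℂ) :
    ∃ y : V → Fin d → ℂ, ∀ x, f x = ∑ i, y i ⬝ᵥ x i := by
  refine ⟨fun i j => f (Pi.single i (Pi.single j 1)), fun x => ?_⟩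
  have hx : x = ∑ i, ∑ j, x i j • (Pi.single i (Pi.single j 1) : V → Fin d → ℂ) := by
    ext a b
    simp [Finset.sum_apply, Pi.single_apply, apply_ite, ite_apply]
  conv_lhs => rw [hx]
  simp [map_sum, dotProduct, mul_comm]

/-- The range of a linear map symmetric for the bilinear pairing contains the annihilator of its
nullspace: a functional vanishing on the range is the pairing with some `y`, and symmetry makes
this `y` a nullvector. -/
lemma mem_range_of_symm [Fintype V] (T : (V → Fin d → ℂ) →ₗ[ℂ] (V → Fin d → ℂ))
    (hT : ∀ x y, ∑ i, x i ⬝ᵥ T y i = ∑ i, T x i ⬝ᵥ y i) (w : V → Fin d → ℂ)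
    (hw : ∀ z, T z = 0 → ∑ i, z i ⬝ᵥ w i = 0) : ∃ z, T z = w := by
  by_contra hne
  obtain ⟨f, hfw, hf⟩ := Submodule.exists_le_ker_of_notMem (p := LinearMap.range T) (v := w) hne
  obtain ⟨y, hy⟩ := exists_pairing f
  refine hfw ?_
  rw [hy]
  apply hw
  have h0 : ∀ x : V → Fin d → ℂ, ∑ i, T y i ⬝ᵥ x i = 0 := fun x => by
    rw [← hT, ← hy]
    exact hf ⟨x, rfl⟩
  ext i j
  simpa [Pi.single_apply, apply_ite, ite_apply, dotProduct] using
    h0 (Pi.single i (Pi.single j 1))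

/-- `L_σ` compressed to the interior: `z ↦ P L_σ P z`, where `P` sets the boundary values to
zero. It stands for the block `(L_σ)_{II}`, padded by zeros. -/
noncomputable def interiorLap (e1 e2 : E → V) (Bd : V → Prop) [DecidablePred Bd]
    (σ : E → Matrix (Fin d) (Fin d) ℂ) : (V → Fin d → ℂ) →ₗ[ℂ] (V → Fin d → ℂ) where
  toFun z := fun i => if Bd i then 0 else dlap e1 e2 σ (fun k => if Bd k then 0 else z k) i
  map_add' x y := by
    ext1 i
    by_cases hi : Bd i
    · simp [hi]
    · have hg : (fun k => if Bd k then (0 : Fin d → ℂ) else (x + y) k) =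
          (fun k => if Bd k then 0 else x k) + fun k => if Bd k then 0 else y k := by
        ext1 k
        by_cases hk : Bd k <;> simp [hk]
      rw [hg]
      simp only [hi, if_false, Pi.add_apply]
      simp only [dlap, ← Finset.sum_add_distrib, ← smul_add, ← mulVec_add]
      simp only [dgrad, Pi.add_apply, add_sub_add_comm]
  map_smul' c x := by
    ext1 i
    by_cases hi : Bd i
    · simp [hi]
    · have hg : (fun k => if Bd k then (0 : Fin d → ℂ) else (c • x) k) =
          c • fun k => if Bd k then (0 : Fin d → ℂ) else x k := by
        ext1 k
        by_cases hk : Bd k <;> simp [hk]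
      rw [hg]
      simp only [hi, if_false, Pi.smul_apply, RingHom.id_apply]
      simp only [dlap, Finset.smul_sum, smul_comm c, ← mulVec_smul]
      simp only [dgrad, Pi.smul_apply, smul_sub]

/-- The interior equation `L_σ z = w` is solvable iff `w` is annihilated by every interior
vector `z` with `σ' ∇z = 0`; the condition does not involve `σ''`. -/
lemma solvable_iff [Fintype V] (e1 e2 : E → V) (Bd : V → Prop) [DecidablePred Bd]
    {σ' σ'' : E → Matrix (Fin d) (Fin d) ℝ}
    (hσ' : ∀ e, (σ' e).PosSemidef) (hσ'' : ∀ e, (σ'' e).IsSymm)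
    (hnull : ∀ e (v : Fin d → ℝ), σ' e *ᵥ v = 0 → σ'' e *ᵥ v = 0) (w : V → Fin d → ℂ) :
    (∃ z : V → Fin d → ℂ, (∀ i, Bd i → z i = 0) ∧ ∀ i, ¬ Bd i →
      dlap e1 e2 (fun e => cplx (σ' e) + Complex.I • cplx (σ'' e)) z i = w i) ↔
    ∀ z : V → Fin d → ℂ, (∀ i, Bd i → z i = 0) →
      (∀ e, cplx (σ' e) *ᵥ dgrad e1 e2 z e = 0) → ∑ i, z i ⬝ᵥ w i = 0 := by
  set σ : E → Matrix (Fin d) (Fin d) ℂ :=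
    fun e => cplx (σ' e) + Complex.I • cplx (σ'' e) with hσ
  have hsymm : ∀ e, (σ e).IsSymm := fun e =>
    (cplx_isSymm (by simpa [IsSymm, IsHermitian, conjTranspose_eq_transpose_of_trivial]
      using (hσ' e).isHermitian)).add ((cplx_isSymm (hσ'' e)).smul _)
  constructor
  · rintro ⟨u, hu, huw⟩ z hz hze
    have h1 : ∑ i, z i ⬝ᵥ w i = ∑ i, z i ⬝ᵥ dlap e1 e2 σ u i := by
      refine Finset.sum_congr rfl fun i _ => ?_
      by_cases hi : Bd i
      · simp [hz i hi]
      · rw [huw i hi]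
    rw [h1, sum_dotProduct_dlap_comm e1 e2 σ hsymm]
    simp [dlap_eq_zero e1 e2 σ (fun e => cplx_null (hnull e) (hze e))]
  · intro hw
    set P : (V → Fin d → ℂ) → V → Fin d → ℂ := fun z k => if Bd k then 0 else z k with hP
    have hP0 : ∀ z i, Bd i → P z i = 0 := fun z i hi => by simp [hP, hi]
    have hTP : ∀ z, interiorLap e1 e2 Bd σ z = P (dlap e1 e2 σ (P z)) := fun z => rfl
    have hPP : ∀ x y : V → Fin d → ℂ, ∑ i, x i ⬝ᵥ P y i = ∑ i, P x i ⬝ᵥ y i := fun x y => by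
      refine Finset.sum_congr rfl fun i _ => ?_
      by_cases hi : Bd i <;> simp [hP, hi]
    obtain ⟨z, hz⟩ := mem_range_of_symm (interiorLap e1 e2 Bd σ)
      (fun x y => by
        rw [hTP, hTP, hPP, sum_dotProduct_dlap_comm e1 e2 σ hsymm, hPP])
      (P w) (fun z hz => by
        rw [hPP]
        refine hw _ (hP0 z) (edge_null_of_dlap e1 e2 Bd hσ' hσ'' (hP0 z) fun i hi => ?_)
        have := congrFun hz i
        simpa [hTP, hP, hi] using this)
    refine ⟨P z, hP0 z, fun i hi => ?_⟩
    have := congrFun hz i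
    simpa [hTP, hP, hi] using this

end

/-- **nullspace equality for complex semidefinite conductivities.**
Let `σ = σ' + iσ''` with `σ'(e)` real symmetric positive semidefinite, `σ''(e)` real
symmetric commuting with `σ'(e)` and `N(σ'(e)) ⊆ N(σ''(e))`. Then
(i) `N((L_σ)_{II}) = N((L_{σ'})_{II})`, (ii) `N((L_σ)_{II}) ⊆ N((L_σ)_{BI})`,
(iii) `R((L_σ)_{II}) = R((L_{σ'})_{II})`, and (iv) `R((L_σ)_{II}) ⊇ R((L_σ)_{IB})`.
Interior nullvectors are encoded as vectors vanishing on the boundary; ranges are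
encoded via interior values of the Laplacian applied to interior-supported vectors. -/
theorem nullspace_range_complex_semidefinite {V E : Type*} [Fintype V] [Fintype E]
    [DecidableEq V] {d : ℕ} (e1 e2 : E → V)
    (Bd : V → Prop) [DecidablePred Bd]
    (σ' σ'' : E → Matrix (Fin d) (Fin d) ℝ)
    (hσ' : ∀ e, (σ' e).PosSemidef) (hσ'' : ∀ e, (σ'' e).IsSymm)
    (hcomm : ∀ e, σ' e * σ'' e = σ'' e * σ' e)
    (hnull : ∀ e (v : Fin d → ℝ), σ' e *ᵥ v = 0 → σ'' e *ᵥ v = 0) :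
    -- (i) nullspace equality
    (∀ z : V → Fin d → ℂ, (∀ i, Bd i → z i = 0) →
      ((∀ i, ¬ Bd i → dlap e1 e2 (fun e => cplx (σ' e) + Complex.I • cplx (σ'' e)) z i = 0) ↔
       (∀ i, ¬ Bd i → dlap e1 e2 (fun e => cplx (σ' e)) z i = 0))) ∧
    -- (ii) nullspace of interior block is annihilated by the boundary-interior block
    (∀ z : V → Fin d → ℂ, (∀ i, Bd i → z i = 0) →
      (∀ i, ¬ Bd i → dlap e1 e2 (fun e => cplx (σ' e) + Complex.I • cplx (σ'' e)) z i = 0) →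
      ∀ i, Bd i → dlap e1 e2 (fun e => cplx (σ' e) + Complex.I • cplx (σ'' e)) z i = 0) ∧
    -- (iii) range equality
    ({w : V → Fin d → ℂ | ∃ z : V → Fin d → ℂ, (∀ i, Bd i → z i = 0) ∧
        ∀ i, ¬ Bd i → dlap e1 e2 (fun e => cplx (σ' e) + Complex.I • cplx (σ'' e)) z i = w i} =
     {w : V → Fin d → ℂ | ∃ z : V → Fin d → ℂ, (∀ i, Bd i → z i = 0) ∧
        ∀ i, ¬ Bd i → dlap e1 e2 (fun e => cplx (σ' e)) z i = w i}) ∧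
    -- (iv) range inclusion for the interior-boundary block
    (∀ g : V → Fin d → ℂ, (∀ i, ¬ Bd i → g i = 0) →
      ∃ z : V → Fin d → ℂ, (∀ i, Bd i → z i = 0) ∧
        ∀ i, ¬ Bd i →
          dlap e1 e2 (fun e => cplx (σ' e) + Complex.I • cplx (σ'' e)) z i =
          dlap e1 e2 (fun e => cplx (σ' e) + Complex.I • cplx (σ'' e)) g i) := by
  -- the real conductivity `σ'` is the instance `σ'' = 0` of the complex one
  have hreal : (fun e => cplx (σ' e)) =
      fun e => cplx (σ' e) + Complex.I • cplx ((0 : E → Matrix (Fin d) (Fin d) ℝ) e) := by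
    ext e i j
    simp [cplx]
  have h0s : ∀ e, ((0 : E → Matrix (Fin d) (Fin d) ℝ) e).IsSymm := fun e => by simp
  have h0n : ∀ e (v : Fin d → ℝ), σ' e *ᵥ v = 0 →
      (0 : E → Matrix (Fin d) (Fin d) ℝ) e *ᵥ v = 0 := fun e v _ => by simp
  refine ⟨fun z hz => ⟨fun h i _ => ?_, fun h i _ => ?_⟩, fun z hz h i _ => ?_, ?_, fun g _ => ?_⟩
  · exact dlap_eq_zero e1 e2 _ (edge_null_of_dlap e1 e2 Bd hσ' hσ'' hz h) i
  · rw [hreal] at h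
    exact dlap_eq_zero e1 e2 _
      (fun e => cplx_null (hnull e) (edge_null_of_dlap e1 e2 Bd hσ' h0s hz h e)) i
  · exact dlap_eq_zero e1 e2 _
      (fun e => cplx_null (hnull e) (edge_null_of_dlap e1 e2 Bd hσ' hσ'' hz h e)) i
  · ext w
    rw [hreal, Set.mem_ofPred_eq, Set.mem_ofPred_eq, solvable_iff e1 e2 Bd hσ' hσ'' hnull,
      solvable_iff e1 e2 Bd hσ' h0s h0n]
  · refine (solvable_iff e1 e2 Bd hσ' hσ'' hnull _).mpr fun z _ hze => ?_
    rw [sum_dotProduct_dlap_comm]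
    · simp [dlap_eq_zero e1 e2 _ (fun e => cplx_null (hnull e) (hze e))]
    · exact fun e => (cplx_isSymm (by
        simpa [IsSymm, IsHermitian, conjTranspose_eq_transpose_of_trivial]
          using (hσ' e).isHermitian)).add ((cplx_isSymm (hσ'' e)).smul _)
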